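/- Let φ be Haar-random on the unit sphere of a d-dimensional complex Hilbert space, P an orthogonal projection of rank M, and t ≥ 1 an integer. Then E[‖Pφ‖^{2t}] = [(M+t−1)(M+t−2)⋯M] / [(d+t−1)(d+t−2)⋯d] = C(M+t−1, t)/C(d+t−1, t). -/

import Mathlib

open MeasureTheory
open scoped InnerProductSpace

section SphereMeasure

variable {E : Type*} [NormedAddCommGroup E] [InnerProductSpace ℂ E] [FiniteDimensional ℂ E]
  [MeasurableSpace E] [BorelSpace E] {μ : Measure E} [IsProbabilityMeasure μ]

/-- A continuous function is integrable for a probability measure carried by the unit sphere. -/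
theorem integrable_of_continuous_of_ae_norm_eq_one (hsph : ∀ᵐ x ∂μ, ‖x‖ = 1)
    {f : E → ℝ} (hf : Continuous f) : Integrable f μ := by
  have : ProperSpace E := FiniteDimensional.proper ℂ E
  obtain ⟨C, hC⟩ := (isCompact_sphere (0 : E) 1).exists_bound_of_continuousOn hf.continuousOn
  refine Integrable.of_bound hf.aestronglyMeasurable C ?_
  filter_upwards [hsph] with x hx
  exact hC x (by simpa using hx)

/-- Differentiation at `0` under an integral over the unit sphere. -/
theorem hasDerivAt_integral_of_ae_norm_eq_one (hsph : ∀ᵐ x ∂μ, ‖x‖ = 1)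
    {g g' : ℝ → E → ℝ} (hg : ∀ θ, Continuous (g θ)) (hg' : Continuous (Function.uncurry g'))
    (h : ∀ θ x, HasDerivAt (fun θ => g θ x) (g' θ x) θ) :
    HasDerivAt (fun θ => ∫ x, g θ x ∂μ) (∫ x, g' 0 x ∂μ) 0 := by
  have : ProperSpace E := FiniteDimensional.proper ℂ E
  obtain ⟨C, hC⟩ := ((isCompact_Icc (a := (-1 : ℝ)) (b := 1)).prod
    (isCompact_sphere (0 : E) 1)).exists_bound_of_continuousOn hg'.continuousOn
  refine (hasDerivAt_integral_of_dominated_loc_of_deriv_le (bound := fun _ => C)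
    (Icc_mem_nhds (a := (-1 : ℝ)) (b := 1) (by norm_num) (by norm_num))
    (Filter.Eventually.of_forall fun θ => (hg θ).aestronglyMeasurable)
    (integrable_of_continuous_of_ae_norm_eq_one hsph (hg 0))
    (hg'.comp (Continuous.prodMk_right 0)).aestronglyMeasurable ?_ (integrable_const C) ?_).2
  · filter_upwards [hsph] with x hx θ hθ
    exact hC (θ, x) ⟨hθ, by simpa using hx⟩
  · exact Filter.Eventually.of_forall fun x θ _ => h θ x

end SphereMeasure

section Rotation

variable {E : Type*} [NormedAddCommGroup E] [InnerProductSpace ℂ E]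

theorem norm_add_smul_sq_of_norm_eq_one {u : E} (hu : ‖u‖ = 1) (x : E) (z : ℂ) :
    ‖x + z • u‖ ^ 2 = ‖x‖ ^ 2 + 2 * ((⟪u, x⟫_ℂ).re * z.re + (⟪u, x⟫_ℂ).im * z.im)
      + (z.re ^ 2 + z.im ^ 2) := by
  rw [norm_add_sq (𝕜 := ℂ), norm_smul, hu, inner_smul_right, ← inner_conj_symm x u, mul_one,
    Complex.sq_norm z, Complex.normSq_apply]
  simp only [RCLike.re_to_complex, Complex.mul_re, Complex.conj_re, Complex.conj_im]
  ring

/-- The rotation by the angle `θ` in the plane of two orthonormal vectors, as a linear map. -/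
noncomputable def planeRotation (u v : E) (θ : ℝ) : E →ₗ[ℂ] E :=
  LinearMap.id
    + (((Real.cos θ - 1 : ℝ) : ℂ) • innerₛₗ ℂ u
        + ((Real.sin θ : ℝ) : ℂ) • innerₛₗ ℂ v).smulRight u
    + (((-Real.sin θ : ℝ) : ℂ) • innerₛₗ ℂ u
        + ((Real.cos θ - 1 : ℝ) : ℂ) • innerₛₗ ℂ v).smulRight v

theorem planeRotation_apply (u v : E) (θ : ℝ) (x : E) :
    planeRotation u v θ x = x
      + (((Real.cos θ - 1 : ℝ) : ℂ) * ⟪u, x⟫_ℂ + ((Real.sin θ : ℝ) : ℂ) * ⟪v, x⟫_ℂ) • u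
      + (((-Real.sin θ : ℝ) : ℂ) * ⟪u, x⟫_ℂ + ((Real.cos θ - 1 : ℝ) : ℂ) * ⟪v, x⟫_ℂ) • v := by
  simp [planeRotation]

variable {u v : E}

theorem norm_planeRotation (hu : ‖u‖ = 1) (hv : ‖v‖ = 1) (huv : ⟪v, u⟫_ℂ = 0) (θ : ℝ) (x : E) :
    ‖planeRotation u v θ x‖ = ‖x‖ := by
  rw [← sq_eq_sq₀ (norm_nonneg _) (norm_nonneg _), planeRotation_apply,
    norm_add_smul_sq_of_norm_eq_one hv, norm_add_smul_sq_of_norm_eq_one hu,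
    inner_add_right, inner_smul_right, huv, mul_zero, add_zero]
  simp only [Complex.add_re, Complex.add_im, Complex.re_ofReal_mul, Complex.im_ofReal_mul]
  linear_combination ((⟪u, x⟫_ℂ).re ^ 2 + (⟪u, x⟫_ℂ).im ^ 2 + (⟪v, x⟫_ℂ).re ^ 2 + (⟪v, x⟫_ℂ).im ^ 2)
    * Real.sin_sq_add_cos_sq θ

theorem inner_left_planeRotation (hu : ‖u‖ = 1) (huv : ⟪u, v⟫_ℂ = 0) (θ : ℝ) (x : E) :
    ⟪u, planeRotation u v θ x⟫_ℂ =
      (Real.cos θ : ℂ) * ⟪u, x⟫_ℂ + (Real.sin θ : ℂ) * ⟪v, x⟫_ℂ := by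
  simp [planeRotation_apply, huv, inner_self_eq_norm_sq_to_K, hu]
  ring

theorem inner_right_planeRotation (hv : ‖v‖ = 1) (huv : ⟪v, u⟫_ℂ = 0) (θ : ℝ) (x : E) :
    ⟪v, planeRotation u v θ x⟫_ℂ =
      -(Real.sin θ : ℂ) * ⟪u, x⟫_ℂ + (Real.cos θ : ℂ) * ⟪v, x⟫_ℂ := by
  simp [planeRotation_apply, huv, inner_self_eq_norm_sq_to_K, hv]
  ring

/-- The real part of `⟪x, u⟫ * ⟪v, x⟫`. -/
noncomputable def crossTerm (u v x : E) : ℝ :=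
  (⟪u, x⟫_ℂ).re * (⟪v, x⟫_ℂ).re + (⟪u, x⟫_ℂ).im * (⟪v, x⟫_ℂ).im

theorem continuous_crossTerm (u v : E) : Continuous (crossTerm u v) := by
  unfold crossTerm
  fun_prop

theorem crossTerm_sq_add_crossTerm_I_smul_sq (u v x : E) :
    crossTerm u v x ^ 2 + crossTerm u (Complex.I • v) x ^ 2
      = ‖⟪u, x⟫_ℂ‖ ^ 2 * ‖⟪v, x⟫_ℂ‖ ^ 2 := by
  simp only [crossTerm, inner_smul_left, Complex.sq_norm, Complex.normSq_apply, Complex.conj_I,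
    Complex.mul_re, Complex.mul_im, Complex.neg_re, Complex.neg_im, Complex.I_re, Complex.I_im]
  ring

theorem crossTerm_planeRotation (hu : ‖u‖ = 1) (hv : ‖v‖ = 1) (huv : ⟪u, v⟫_ℂ = 0)
    (θ : ℝ) (x : E) :
    crossTerm u v (planeRotation u v θ x) =
      (Real.cos θ ^ 2 - Real.sin θ ^ 2) * crossTerm u v x
        + Real.cos θ * Real.sin θ * (‖⟪v, x⟫_ℂ‖ ^ 2 - ‖⟪u, x⟫_ℂ‖ ^ 2) := by
  have hvu : ⟪v, u⟫_ℂ = 0 := inner_eq_zero_symm.mp huv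
  unfold crossTerm
  rw [inner_left_planeRotation hu huv, inner_right_planeRotation hv hvu, ← Complex.ofReal_neg]
  simp only [Complex.add_re, Complex.add_im, Complex.re_ofReal_mul, Complex.im_ofReal_mul,
    Complex.sq_norm, Complex.normSq_apply]
  ring

theorem norm_sq_map_planeRotation {P : E →ₗ[ℂ] E} (hsym : ∀ x y, ⟪P x, y⟫_ℂ = ⟪x, P y⟫_ℂ)
    (hu : ‖u‖ = 1) (hPu : P u = u) (hPv : P v = 0) (θ : ℝ) (x : E) :
    ‖P (planeRotation u v θ x)‖ ^ 2 = ‖P x‖ ^ 2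
      + Real.sin θ ^ 2 * (‖⟪v, x⟫_ℂ‖ ^ 2 - ‖⟪u, x⟫_ℂ‖ ^ 2)
      + 2 * (Real.cos θ * Real.sin θ) * crossTerm u v x := by
  rw [planeRotation_apply, map_add, map_add, map_smul, map_smul, hPu, hPv, smul_zero, add_zero,
    norm_add_smul_sq_of_norm_eq_one hu, ← hsym, hPu, crossTerm]
  simp only [Complex.add_re, Complex.add_im, Complex.re_ofReal_mul, Complex.im_ofReal_mul,
    Complex.sq_norm, Complex.normSq_apply]
  linear_combination ((⟪u, x⟫_ℂ).re ^ 2 + (⟪u, x⟫_ℂ).im ^ 2) * Real.sin_sq_add_cos_sq θ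

variable [FiniteDimensional ℂ E] [MeasurableSpace E] [BorelSpace E]
  {μ : Measure E}

theorem integral_comp_planeRotation (hinv : ∀ U : E ≃ₗᵢ[ℂ] E, μ.map U = μ)
    (hu : ‖u‖ = 1) (hv : ‖v‖ = 1) (huv : ⟪u, v⟫_ℂ = 0) (θ : ℝ) {f : E → ℝ} (hf : Continuous f) :
    ∫ x, f (planeRotation u v θ x) ∂μ = ∫ x, f x ∂μ := by
  let L : E →ₗᵢ[ℂ] E :=
    ⟨planeRotation u v θ, norm_planeRotation hu hv (inner_eq_zero_symm.mp huv) θ⟩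
  let U : E ≃ₗᵢ[ℂ] E := L.toLinearIsometryEquiv rfl
  conv_rhs => rw [← hinv U]
  rw [integral_map U.continuous.aemeasurable hf.aestronglyMeasurable]
  rfl

variable [IsProbabilityMeasure μ] {P : E →ₗ[ℂ] E}

/-- Stationarity of `∫ ‖P x‖ ^ (2 * n) * crossTerm u v x` under rotations of the `u`-`v` plane. -/
theorem integral_crossTerm_sq (hsph : ∀ᵐ x ∂μ, ‖x‖ = 1) (hinv : ∀ U : E ≃ₗᵢ[ℂ] E, μ.map U = μ)
    (hsym : ∀ x y, ⟪P x, y⟫_ℂ = ⟪x, P y⟫_ℂ) (hu : ‖u‖ = 1) (hv : ‖v‖ = 1)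
    (hPu : P u = u) (hPv : P v = 0) (n : ℕ) :
    ∫ x, (n * (‖P x‖ ^ 2) ^ (n - 1) * (2 * crossTerm u v x) * crossTerm u v x
      + (‖P x‖ ^ 2) ^ n * (‖⟪v, x⟫_ℂ‖ ^ 2 - ‖⟪u, x⟫_ℂ‖ ^ 2)) ∂μ = 0 := by
  have hP : Continuous P := P.continuous_of_finiteDimensional
  have hcross := continuous_crossTerm u v
  have huv : ⟪u, v⟫_ℂ = 0 := by rw [← hPu, hsym, hPv, inner_zero_right]
  let D : E → ℝ := fun x => ‖⟪v, x⟫_ℂ‖ ^ 2 - ‖⟪u, x⟫_ℂ‖ ^ 2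
  have hD : Continuous D := by fun_prop
  let S : ℝ → E → ℝ := fun θ x => ‖P x‖ ^ 2 + Real.sin θ ^ 2 * D x
    + 2 * (Real.cos θ * Real.sin θ) * crossTerm u v x
  let R : ℝ → E → ℝ := fun θ x => (Real.cos θ ^ 2 - Real.sin θ ^ 2) * crossTerm u v x
    + Real.cos θ * Real.sin θ * D x
  let R' : ℝ → E → ℝ := fun θ x => -4 * (Real.cos θ * Real.sin θ) * crossTerm u v x
    + (Real.cos θ ^ 2 - Real.sin θ ^ 2) * D x
  have hS (θ x) : HasDerivAt (fun θ => S θ x) (2 * R θ x) θ := by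
    have hs := Real.hasDerivAt_sin θ
    have hc := Real.hasDerivAt_cos θ
    refine ((((hs.pow 2).mul_const (D x)).const_add (‖P x‖ ^ 2)).add
      (((hc.mul hs).const_mul 2).mul_const (crossTerm u v x))).congr_deriv ?_
    simp only [R]
    push_cast
    ring
  have hR (θ x) : HasDerivAt (fun θ => R θ x) (R' θ x) θ := by
    have hs := Real.hasDerivAt_sin θ
    have hc := Real.hasDerivAt_cos θ
    refine ((((hc.pow 2).sub (hs.pow 2)).mul_const (crossTerm u v x)).add
      ((hc.mul hs).mul_const (D x))).congr_deriv ?_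
    simp only [R']
    push_cast
    ring
  have hder := hasDerivAt_integral_of_ae_norm_eq_one hsph
    (g := fun θ x => S θ x ^ n * R θ x)
    (g' := fun θ x => n * S θ x ^ (n - 1) * (2 * R θ x) * R θ x + S θ x ^ n * R' θ x)
    (fun θ => by fun_prop) (by simp only [Function.uncurry_def]; fun_prop)
    (fun θ x => ((hS θ x).pow n).mul (hR θ x))
  have hconst (θ : ℝ) : ∫ x, S θ x ^ n * R θ x ∂μ
      = ∫ x, (‖P x‖ ^ 2) ^ n * crossTerm u v x ∂μ := by
    rw [← integral_comp_planeRotation hinv hu hv huv θ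
      (f := fun x => (‖P x‖ ^ 2) ^ n * crossTerm u v x) (by fun_prop)]
    simp only [norm_sq_map_planeRotation hsym hu hPu hPv,
      crossTerm_planeRotation hu hv huv, S, R, D]
  simp only [hconst] at hder
  simpa [S, R, R', D] using hder.unique (hasDerivAt_const _ _)

theorem integral_pow_mul_inner_sq_mul_inner_sq (hsph : ∀ᵐ x ∂μ, ‖x‖ = 1)
    (hinv : ∀ U : E ≃ₗᵢ[ℂ] E, μ.map U = μ)
    (hsym : ∀ x y, ⟪P x, y⟫_ℂ = ⟪x, P y⟫_ℂ) (hu : ‖u‖ = 1) (hv : ‖v‖ = 1)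
    (hPu : P u = u) (hPv : P v = 0) (n : ℕ) :
    ∫ x, (n * (‖P x‖ ^ 2) ^ (n - 1) * (‖⟪u, x⟫_ℂ‖ ^ 2 * ‖⟪v, x⟫_ℂ‖ ^ 2)
      + (‖P x‖ ^ 2) ^ n * (‖⟪v, x⟫_ℂ‖ ^ 2 - ‖⟪u, x⟫_ℂ‖ ^ 2)) ∂μ = 0 := by
  have hP : Continuous P := P.continuous_of_finiteDimensional
  have hcross := continuous_crossTerm u v
  have hcrossI := continuous_crossTerm u (Complex.I • v)
  have h := integral_crossTerm_sq hsph hinv hsym hu hv hPu hPv n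
  have hI := integral_crossTerm_sq hsph hinv hsym hu (v := Complex.I • v) (by simp [norm_smul, hv])
    hPu (by simp [hPv]) n
  have hsum := congrArg₂ (· + ·) h hI
  rw [← integral_add (integrable_of_continuous_of_ae_norm_eq_one hsph (by fun_prop))
    (integrable_of_continuous_of_ae_norm_eq_one hsph (by fun_prop))] at hsum
  refine mul_left_cancel₀ (two_ne_zero (α := ℝ)) ?_
  rw [← integral_const_mul, mul_zero, ← add_zero (0 : ℝ), ← hsum]
  refine integral_congr_ae (Filter.Eventually.of_forall fun x => ?_)
  have hnorm : ‖⟪Complex.I • v, x⟫_ℂ‖ = ‖⟪v, x⟫_ℂ‖ := by simp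
  simp only [hnorm, ← crossTerm_sq_add_crossTerm_I_smul_sq u v x]
  ring

/-- The one-step recursion between consecutive moments of `‖P x‖ ^ 2`. -/
theorem finrank_add_mul_integral_norm_map_pow_succ (hsph : ∀ᵐ x ∂μ, ‖x‖ = 1)
    (hinv : ∀ U : E ≃ₗᵢ[ℂ] E, μ.map U = μ) (hidem : ∀ x, P (P x) = P x)
    (hsym : ∀ x y, ⟪P x, y⟫_ℂ = ⟪x, P y⟫_ℂ) (n : ℕ) :
    (Module.finrank ℂ E + n : ℝ) * ∫ x, (‖P x‖ ^ 2) ^ (n + 1) ∂μ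
      = (Module.finrank ℂ (LinearMap.range P) + n : ℝ) * ∫ x, (‖P x‖ ^ 2) ^ n ∂μ := by
  have hP : Continuous P := P.continuous_of_finiteDimensional
  let b := stdOrthonormalBasis ℂ (LinearMap.range P)
  let c := stdOrthonormalBasis ℂ (LinearMap.ker P)
  have hPb (i) : P (b i : E) = b i := by
    obtain ⟨y, hy⟩ := (b i).2
    rw [← hy, hidem]
  have hPc (j) : P (c j : E) = 0 := (c j).2
  have hb_sum (x : E) : ∑ i, ‖⟪(b i : E), x⟫_ℂ‖ ^ 2 = ‖P x‖ ^ 2 := by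
    have h := b.sum_sq_norm_inner_right ⟨P x, LinearMap.mem_range_self P x⟩
    simp only [Submodule.coe_inner, Submodule.coe_norm, ← hsym, hPb] at h
    exact h
  have hc_sum (x : E) : ∑ j, ‖⟪(c j : E), x⟫_ℂ‖ ^ 2 = ‖x‖ ^ 2 - ‖P x‖ ^ 2 := by
    have h := c.sum_sq_norm_inner_right ⟨x - P x, by simp [hidem]⟩
    simp only [Submodule.coe_inner, Submodule.coe_norm, inner_sub_right, ← hsym, hPc,
      inner_zero_left, sub_zero] at h
    have horth : ⟪P x, x - P x⟫_ℂ = 0 := by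
      rw [hsym, map_sub, hidem, sub_self, inner_zero_right]
    have hpyth := norm_add_sq_eq_norm_sq_add_norm_sq_of_inner_eq_zero _ _ horth
    rw [add_sub_cancel] at hpyth
    rw [h]
    linarith
  have hrank : (Module.finrank ℂ (LinearMap.range P) : ℝ) + Module.finrank ℂ (LinearMap.ker P)
      = Module.finrank ℂ E := by
    exact_mod_cast P.finrank_range_add_finrank_ker
  have hzero := Finset.sum_eq_zero (s := Finset.univ) fun i _ =>
    Finset.sum_eq_zero (s := Finset.univ) fun j _ =>
      integral_pow_mul_inner_sq_mul_inner_sq hsph hinv hsym (u := (b i : E)) (v := (c j : E))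
        (b.orthonormal.1 i) (c.orthonormal.1 j) (hPb i) (hPc j) n
  have hint (i j) := integrable_of_continuous_of_ae_norm_eq_one hsph
    (f := fun x => n * (‖P x‖ ^ 2) ^ (n - 1) * (‖⟪(b i : E), x⟫_ℂ‖ ^ 2 * ‖⟪(c j : E), x⟫_ℂ‖ ^ 2)
      + (‖P x‖ ^ 2) ^ n * (‖⟪(c j : E), x⟫_ℂ‖ ^ 2 - ‖⟪(b i : E), x⟫_ℂ‖ ^ 2)) (by fun_prop)
  simp only [← integral_finsetSum _ fun j _ => hint _ j] at hzero
  rw [← integral_finsetSum _ fun i _ => integrable_finsetSum _ fun j _ => hint i j] at hzero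
  rw [← sub_eq_zero, ← integral_const_mul, ← integral_const_mul,
    ← integral_sub (integrable_of_continuous_of_ae_norm_eq_one hsph (by fun_prop))
      (integrable_of_continuous_of_ae_norm_eq_one hsph (by fun_prop)), ← neg_eq_zero,
    ← integral_neg, ← hzero]
  refine integral_congr_ae ?_
  filter_upwards [hsph] with x hx
  have hc_sum' : ∑ j, ‖⟪(c j : E), x⟫_ℂ‖ ^ 2 = 1 - ‖P x‖ ^ 2 := by rw [hc_sum, hx, one_pow]
  simp only [Finset.sum_add_distrib, ← Finset.mul_sum, ← Finset.sum_mul, Finset.sum_sub_distrib,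
    Finset.sum_const, Finset.card_univ, Fintype.card_fin, nsmul_eq_mul, hb_sum, hc_sum', ← hrank]
  rcases n with _ | n
  · simp
    ring
  · push_cast
    ring

end Rotation

theorem prod_range_add_eq_factorial_mul_choose (m t : ℕ) :
    ∏ k ∈ Finset.range t, ((m : ℝ) + k) = (t.factorial : ℝ) * ((m + t - 1).choose t : ℝ) := by
  have h := Nat.ascFactorial_eq_factorial_mul_choose' m t
  rw [Nat.ascFactorial_eq_prod_range] at h
  exact_mod_cast h

/-- For `φ` Haar-random on the unit sphere of a `d`-dimensional complex Hilbert
space and `P` an orthogonal projection of rank `M`,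
`E[‖Pφ‖^{2t}] = (M+t-1)⋯M / ((d+t-1)⋯d) = C(M+t-1,t)/C(d+t-1,t)`. -/
theorem haar_moment_proj {E : Type*} [NormedAddCommGroup E] [InnerProductSpace ℂ E]
    [FiniteDimensional ℂ E] [MeasurableSpace E] [BorelSpace E]
    (μ : Measure E) [IsProbabilityMeasure μ]
    (hsph : ∀ᵐ x ∂μ, ‖x‖ = 1)
    (hinv : ∀ U : E ≃ₗᵢ[ℂ] E, μ.map U = μ)
    (P : E →ₗ[ℂ] E) (hidem : ∀ x, P (P x) = P x)
    (hsym : ∀ x y, ⟪P x, y⟫_ℂ = ⟪x, P y⟫_ℂ)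
    (M d t : ℕ) (ht : 1 ≤ t)
    (hrank : Module.finrank ℂ (LinearMap.range P) = M)
    (hd : Module.finrank ℂ E = d) :
    ∫ x, ‖P x‖ ^ (2 * t) ∂μ =
        (∏ k ∈ Finset.range t, ((M : ℝ) + k)) / (∏ k ∈ Finset.range t, ((d : ℝ) + k)) ∧
      ∫ x, ‖P x‖ ^ (2 * t) ∂μ =
        ((M + t - 1).choose t : ℝ) / ((d + t - 1).choose t : ℝ) := by
  have hd_pos : 0 < d := by
    obtain ⟨x, hx⟩ := hsph.exists
    have : Nontrivial E := ⟨x, 0, fun h => by simp [h] at hx⟩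
    exact hd ▸ Module.finrank_pos
  have hmoment (n : ℕ) : ∫ x, (‖P x‖ ^ 2) ^ n ∂μ =
      (∏ k ∈ Finset.range n, ((M : ℝ) + k)) / (∏ k ∈ Finset.range n, ((d : ℝ) + k)) := by
    induction n with
    | zero => simp
    | succ n ih =>
      have hrec := finrank_add_mul_integral_norm_map_pow_succ hsph hinv hidem hsym n
      rw [hd, hrank, ih] at hrec
      have hdn : (d + n : ℝ) ≠ 0 := by positivity
      rw [Finset.prod_range_succ, Finset.prod_range_succ, mul_div_mul_comm,
        mul_comm (_ / _), div_mul_eq_mul_div, ← hrec, mul_div_cancel_left₀ _ hdn]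
  simp only [pow_mul]
  refine ⟨hmoment t, (hmoment t).trans ?_⟩
  rw [prod_range_add_eq_factorial_mul_choose M t, prod_range_add_eq_factorial_mul_choose d t,
    mul_div_mul_left _ _ (by positivity)]
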